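/- Let C = β ⨍_{B_1} |y|² dy = βN/(N+2). Then the sequence of random variables M_k = |X_k − x_0|² − C k ε², k ≥ 0, is a submartingale with respect to the filtration (F_k). -/

import Mathlib

open MeasureTheory Metric

noncomputable section

/-!
Given `X_k = x`, the law `P_x` of `X_{k+1}` has mean `x`, so
`∫ |y - x₀|² dP_x = |x - x₀|² + ∫ |y - x|² dP_x`: the expected increment of `|X_k - x₀|²` is the
variance of `P_x`. The uniform part of `P_x` alone contributes `β ε² N / (N + 2)` to this variance,
whatever `ν_x` is. The transition rule is assumed for bounded test functions only; since the jumps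
are bounded, `X_k` stays in a fixed ball for each `k` and `|y - x₀|²` may be truncated outside it.
-/

lemma integral_id_eq_zero_of_isNegInvariant {E : Type*} [NormedAddCommGroup E] [NormedSpace ℝ E]
    [MeasurableSpace E] [MeasurableNeg E] (ρ : Measure E) [ρ.IsNegInvariant] :
    ∫ z, z ∂ρ = 0 := by
  have : IsAddTorsionFree E := .of_isTorsionFree ℝ E
  have h := integral_neg_eq_self (fun z : E ↦ z) ρ
  rwa [integral_neg, neg_eq_self] at h

lemma isNegInvariant_of_measure_neg_eq {G : Type*} [InvolutiveNeg G] [MeasurableSpace G]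
    [MeasurableNeg G] {ρ : Measure G} (h : ∀ s, MeasurableSet s → ρ (-s) = ρ s) :
    ρ.IsNegInvariant where
  neg_eq_self := Measure.ext fun s hs ↦ by rw [Measure.neg_apply, h s hs]

lemma isNegInvariant_restrict {G : Type*} [InvolutiveNeg G] [MeasurableSpace G]
    [MeasurableNeg G] (ρ : Measure G) [ρ.IsNegInvariant] {s : Set G} (hs : -s = s) :
    (ρ.restrict s).IsNegInvariant :=
  isNegInvariant_of_measure_neg_eq fun t ht ↦ by
    rw [Measure.restrict_apply ht, Measure.restrict_apply ht.neg, ← Measure.measure_neg ρ (t ∩ s),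
      Set.inter_neg, hs]

lemma integral_norm_sub_sq_eq_add_integral_norm_sub_mean_sq {E : Type*} [NormedAddCommGroup E]
    [InnerProductSpace ℝ E] [CompleteSpace E] [MeasurableSpace E] {P : Measure E}
    [IsProbabilityMeasure P] (hP : MemLp (fun y ↦ y) 2 P) (a : E) :
    ∫ y, ‖y - a‖ ^ 2 ∂P = ‖(∫ y, y ∂P) - a‖ ^ 2 + ∫ y, ‖y - ∫ y, y ∂P‖ ^ 2 ∂P := by
  set m := ∫ y, y ∂P
  have hcentered : MemLp (fun y ↦ y - m) 2 P := hP.sub (memLp_const m)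
  have hint : Integrable (fun y ↦ y - m) P := hcentered.integrable one_le_two
  have hsq : Integrable (fun y ↦ ‖y - m‖ ^ 2) P := hcentered.integrable_norm_pow two_ne_zero
  have hmean : ∫ y, (y - m) ∂P = 0 := by
    rw [integral_sub (hP.integrable one_le_two) (integrable_const m), integral_const, probReal_univ,
      one_smul, sub_self]
  have hexpand (y : E) :
      ‖y - a‖ ^ 2 = ‖m - a‖ ^ 2 + 2 * inner ℝ (m - a) (y - m) + ‖y - m‖ ^ 2 := by
    rw [← norm_add_sq_real, sub_add_sub_cancel']
  have hcross : Integrable (fun y ↦ 2 * inner ℝ (m - a) (y - m)) P :=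
    (hint.const_inner (m - a)).const_mul 2
  have hconst_cross : Integrable (fun y ↦ ‖m - a‖ ^ 2 + 2 * inner ℝ (m - a) (y - m)) P :=
    (integrable_const _).add hcross
  calc ∫ y, ‖y - a‖ ^ 2 ∂P
      = ∫ y, (‖m - a‖ ^ 2 + 2 * inner ℝ (m - a) (y - m) + ‖y - m‖ ^ 2) ∂P :=
        integral_congr_ae (ae_of_all _ hexpand)
    _ = ‖m - a‖ ^ 2 + 2 * inner ℝ (m - a) (∫ y, (y - m) ∂P) + ∫ y, ‖y - m‖ ^ 2 ∂P := by
        rw [integral_add hconst_cross hsq,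
          integral_add (integrable_const _) hcross, integral_const_mul, integral_inner hint,
          integral_const, probReal_univ, one_smul]
    _ = ‖m - a‖ ^ 2 + ∫ y, ‖y - m‖ ^ 2 ∂P := by rw [hmean, inner_zero_right, mul_zero, add_zero]

section Balls

variable {S : Type*} [PseudoMetricSpace S] [ProperSpace S] [MeasurableSpace S] (μ : Measure S)
  [μ.IsOpenPosMeasure] [IsFiniteMeasureOnCompacts μ] (x : S) {r : ℝ}

lemma measureReal_ball_pos (hr : 0 < r) : 0 < μ.real (ball x r) :=
  ENNReal.toReal_pos (measure_ball_pos μ x hr).ne' measure_ball_lt_top.ne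

lemma isProbabilityMeasure_cond_ball (hr : 0 < r) :
    IsProbabilityMeasure (ProbabilityTheory.cond μ (ball x r)) :=
  ProbabilityTheory.cond_isProbabilityMeasure_of_finite (measure_ball_pos μ x hr).ne'
    measure_ball_lt_top.ne

end Balls

lemma setAverage_eq_integral_cond {α F : Type*} {mα : MeasurableSpace α} [NormedAddCommGroup F]
    [NormedSpace ℝ F] (μ : Measure α) (s : Set α) (f : α → F) :
    ⨍ y in s, f y ∂μ = ∫ y, f y ∂ProbabilityTheory.cond μ s := by
  rw [average, Measure.restrict_apply_univ, ProbabilityTheory.cond]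

lemma setAverage_ball_eq_setAverage_ball_zero {E F : Type*} [SeminormedAddCommGroup E]
    [MeasurableSpace E] [MeasurableAdd E] [NormedAddCommGroup F] [NormedSpace ℝ F]
    (vol : Measure E) [vol.IsAddLeftInvariant] (f : E → F) (x : E) (r : ℝ) :
    ⨍ y in ball x r, f y ∂vol = ⨍ z in ball 0 r, f (x + z) ∂vol := by
  have hball : (x + ·) ⁻¹' ball x r = ball 0 r := by
    rw [preimage_add_ball, sub_self]
  have hvol : vol (ball x r) = vol (ball 0 r) := by rw [← hball, measure_preimage_add]
  rw [setAverage_eq, setAverage_eq, measureReal_def, measureReal_def, hvol, ← hball,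
    (measurePreserving_add_left vol x).setIntegral_preimage_emb (measurableEmbedding_addLeft x)]

section BallAverages

variable {E : Type*} [NormedAddCommGroup E] [NormedSpace ℝ E] [MeasurableSpace E] [BorelSpace E]
  [FiniteDimensional ℝ E] (vol : Measure E) [vol.IsAddHaarMeasure]

lemma setAverage_ball_id (x : E) {r : ℝ} (hr : 0 < r) : ⨍ y in ball x r, y ∂vol = x := by
  have hsymm : (vol.restrict (ball (0 : E) r)).IsNegInvariant :=
    isNegInvariant_restrict vol (by rw [neg_ball, neg_zero])
  have hzero : ∫ z in ball (0 : E) r, z ∂vol = 0 := integral_id_eq_zero_of_isNegInvariant _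
  have hpos : 0 < vol.real (ball (0 : E) r) := measureReal_ball_pos vol 0 hr
  have hint : IntegrableOn (fun z : E ↦ z) (ball 0 r) vol :=
    (continuous_id.continuousOn.integrableOn_compact (isCompact_closedBall 0 r)).mono_set
      ball_subset_closedBall
  have hconst : IntegrableOn (fun _ ↦ x) (ball (0 : E) r) vol :=
    integrableOn_const measure_ball_lt_top.ne
  rw [setAverage_ball_eq_setAverage_ball_zero, setAverage_eq,
    integral_add hconst hint, hzero, add_zero,
    setIntegral_const, inv_smul_smul₀ hpos.ne']

lemma setIntegral_ball_zero_norm_pow [Nontrivial E] {r : ℝ} (hr : 0 ≤ r) (p : ℕ) :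
    ∫ z in ball (0 : E) r, ‖z‖ ^ p ∂vol =
      vol.real (ball (0 : E) r) * (r ^ p * (Module.finrank ℝ E / (Module.finrank ℝ E + p))) := by
  obtain ⟨n, hn⟩ : ∃ n, Module.finrank ℝ E = n + 1 :=
    Nat.exists_eq_succ_of_ne_zero Module.finrank_pos.ne'
  have hmul (t : ℝ) : t ^ n • (Set.Iio r).indicator (· ^ p) t =
      (Set.Iio r).indicator (· ^ (n + p)) t := by
    simp [Set.indicator, pow_add]
  have hradial : ∫ t in Set.Ioi (0 : ℝ), t ^ n • (Set.Iio r).indicator (· ^ p) t =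
      r ^ (n + p + 1) / (n + p + 1) := by
    simp_rw [hmul]
    rw [setIntegral_indicator measurableSet_Iio, Set.Ioi_inter_Iio, ← integral_Ioc_eq_integral_Ioo,
      ← intervalIntegral.integral_of_le hr, integral_pow]
    simp
  have hball : vol.real (ball (0 : E) r) = r ^ (n + 1) * vol.real (ball (0 : E) 1) := by
    rw [measureReal_def, Measure.addHaar_ball _ _ hr, hn, ENNReal.toReal_mul,
      ENNReal.toReal_ofReal (by positivity), measureReal_def]
  calc ∫ z in ball (0 : E) r, ‖z‖ ^ p ∂vol
      = ∫ z : E, (Set.Iio r).indicator (· ^ p) ‖z‖ ∂vol := by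
        rw [← integral_indicator measurableSet_ball]
        congr with z
        simp [Set.indicator]
    _ = (n + 1) * (vol.real (ball (0 : E) 1) * (r ^ (n + p + 1) / (n + p + 1))) := by
        rw [integral_fun_norm_addHaar, hn, Nat.add_sub_cancel, hradial]
        simp
    _ = _ := by
        rw [hball, hn]
        push_cast
        ring

lemma setAverage_ball_norm_sub_pow (x : E) {r : ℝ} (hr : 0 < r) {p : ℕ} (hp : p ≠ 0) :
    ⨍ y in ball x r, ‖y - x‖ ^ p ∂vol =
      r ^ p * (Module.finrank ℝ E / (Module.finrank ℝ E + p)) := by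
  rw [setAverage_ball_eq_setAverage_ball_zero, setAverage_eq]
  simp_rw [add_sub_cancel_left]
  rcases subsingleton_or_nontrivial E with hE | hE
  · simp [Subsingleton.elim _ (0 : E), hp, Module.finrank_zero_of_subsingleton]
  · rw [setIntegral_ball_zero_norm_pow vol hr.le, smul_eq_mul,
      inv_mul_cancel_left₀ (measureReal_ball_pos vol 0 hr).ne']

end BallAverages

/-- The law of `X (k + 1)` given `𝔉 k` is `κ (X k)`, tested against bounded measurable functions.
The family `κ` need not be a `ProbabilityTheory.Kernel`: no measurability of `x ↦ κ x` is asked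
for. -/
def HasTransitionLaw {S Ω : Type*} [MeasurableSpace S] {m0 : MeasurableSpace Ω} (μ : Measure Ω)
    (𝔉 : Filtration ℕ m0) (X : ℕ → Ω → S) (κ : S → Measure S) : Prop :=
  ∀ (k : ℕ) (g : S → ℝ), Measurable g → (∃ M, ∀ y, |g y| ≤ M) →
    μ[fun ω ↦ g (X (k + 1) ω) | 𝔉 k] =ᵐ[μ] fun ω ↦ ∫ y, g y ∂κ (X k ω)

namespace HasTransitionLaw

section General

variable {S Ω : Type*} [MeasurableSpace S] {m0 : MeasurableSpace Ω} {μ : Measure Ω}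
  [IsFiniteMeasure μ] {𝔉 : Filtration ℕ m0} {X : ℕ → Ω → S} {κ : S → Measure S} {k : ℕ} {s : Set S}

lemma ae_mem_succ (h : HasTransitionLaw μ 𝔉 X κ) (hX : Measurable (X (k + 1)))
    (hs : MeasurableSet s) (hκ : ∀ᵐ ω ∂μ, ∀ᵐ y ∂κ (X k ω), y ∈ s) :
    ∀ᵐ ω ∂μ, X (k + 1) ω ∈ s := by
  have hexit : MeasurableSet (X (k + 1) ⁻¹' sᶜ) := hX hs.compl
  have hindicator : (fun ω ↦ sᶜ.indicator (1 : S → ℝ) (X (k + 1) ω)) =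
      (X (k + 1) ⁻¹' sᶜ).indicator 1 := rfl
  have hcond : μ[fun ω ↦ sᶜ.indicator (1 : S → ℝ) (X (k + 1) ω) | 𝔉 k] =ᵐ[μ] 0 := by
    have hbdd : ∃ M, ∀ y, |sᶜ.indicator (1 : S → ℝ) y| ≤ M :=
      ⟨1, fun y ↦ by by_cases hy : y ∈ s <;> simp [hy]⟩
    filter_upwards [h k _ (measurable_one.indicator hs.compl) hbdd, hκ] with ω hω hmem
    rw [hω]
    exact integral_eq_zero_of_ae (hmem.mono fun y hy ↦ by simp [hy])
  have hprob : μ.real (X (k + 1) ⁻¹' sᶜ) = 0 := by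
    rw [← integral_indicator_one hexit, ← hindicator, ← integral_condExp (𝔉.le k),
      integral_congr_ae hcond]
    simp
  exact (measureReal_eq_zero_iff).1 hprob

lemma condExp_ae_eq (h : HasTransitionLaw μ 𝔉 X κ) (hX : Measurable (X (k + 1)))
    (hs : MeasurableSet s) (hκ : ∀ᵐ ω ∂μ, ∀ᵐ y ∂κ (X k ω), y ∈ s) {f : S → ℝ} (hf : Measurable f)
    (hf_bdd : ∃ M, ∀ y ∈ s, |f y| ≤ M) :
    μ[fun ω ↦ f (X (k + 1) ω) | 𝔉 k] =ᵐ[μ] fun ω ↦ ∫ y, f y ∂κ (X k ω) := by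
  obtain ⟨M, hM⟩ := hf_bdd
  have htrunc_bdd (y : S) : |s.indicator f y| ≤ max M 0 := by
    by_cases hy : y ∈ s
    · rw [Set.indicator_of_mem hy]
      exact (hM y hy).trans (le_max_left _ _)
    · simp [hy]
  have htrunc : (fun ω ↦ f (X (k + 1) ω)) =ᵐ[μ] fun ω ↦ s.indicator f (X (k + 1) ω) :=
    (h.ae_mem_succ hX hs hκ).mono fun ω hω ↦ (Set.indicator_of_mem hω f).symm
  filter_upwards [condExp_congr_ae htrunc, h k _ (hf.indicator hs) ⟨_, htrunc_bdd⟩, hκ]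
    with ω heq hω hmem
  rw [heq, hω]
  exact integral_congr_ae (hmem.mono fun y hy ↦ Set.indicator_of_mem hy f)

end General

variable {S Ω : Type*} [PseudoMetricSpace S] [MeasurableSpace S] [OpensMeasurableSpace S]
  {m0 : MeasurableSpace Ω} {μ : Measure Ω} [IsFiniteMeasure μ] {𝔉 : Filtration ℕ m0}
  {X : ℕ → Ω → S} {κ : S → Measure S} {a : S} {r R : ℝ}

lemma ae_mem_closedBall (h : HasTransitionLaw μ 𝔉 X κ) (hX : ∀ k, Measurable (X k))
    (hX0 : ∀ᵐ ω ∂μ, X 0 ω ∈ closedBall a r) (hκ : ∀ x, ∀ᵐ y ∂κ x, y ∈ closedBall x R) (k : ℕ) :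
    ∀ᵐ ω ∂μ, X k ω ∈ closedBall a (r + k * R) := by
  induction k with
  | zero => simpa using hX0
  | succ k ih =>
    refine h.ae_mem_succ (hX _) measurableSet_closedBall (ih.mono fun ω hω ↦ ?_)
    refine (hκ (X k ω)).mono fun y hy ↦ ?_
    rw [mem_closedBall] at hω hy ⊢
    push_cast
    linarith [dist_triangle y (X k ω) a]

lemma submartingale_comp_sub_mul (h : HasTransitionLaw μ 𝔉 X κ) (hX : Adapted 𝔉 X)
    (hX0 : ∀ᵐ ω ∂μ, X 0 ω ∈ closedBall a r) (hκ : ∀ x, ∀ᵐ y ∂κ x, y ∈ closedBall x R)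
    {f : S → ℝ} (hf : Measurable f) (hf_bdd : ∀ ρ, ∃ M, ∀ y ∈ closedBall a ρ, |f y| ≤ M) {c : ℝ}
    (hdrift : ∀ x, f x + c ≤ ∫ y, f y ∂κ x) :
    Submartingale (fun k ω ↦ f (X k ω) - c * k) 𝔉 μ := by
  have hX_meas (k : ℕ) : Measurable (X k) := (hX k).mono (𝔉.le k) le_rfl
  have hball (k : ℕ) := h.ae_mem_closedBall hX_meas hX0 hκ k
  have hint (k : ℕ) : Integrable (fun ω ↦ f (X k ω)) μ := by
    obtain ⟨M, hM⟩ := hf_bdd (r + k * R)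
    exact .of_bound (hf.comp (hX_meas k)).aestronglyMeasurable M ((hball k).mono fun ω ↦ hM _)
  refine submartingale_nat (fun k ↦ ((hf.comp (hX k)).sub_const _).stronglyMeasurable)
    (fun k ↦ (hint k).sub (integrable_const _)) fun k ↦ ?_
  have hjump : ∀ᵐ ω ∂μ, ∀ᵐ y ∂κ (X k ω), y ∈ closedBall a (r + k * R + R) := by
    filter_upwards [hball k] with ω hω
    filter_upwards [hκ (X k ω)] with y hy
    rw [mem_closedBall] at hω hy ⊢
    linarith [dist_triangle y (X k ω) a]
  have hcond := h.condExp_ae_eq (hX_meas (k + 1)) measurableSet_closedBall hjump hf (hf_bdd _)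
  have hsub := condExp_sub (hint (k + 1)) (integrable_const (c * (k + 1 : ℕ))) (𝔉 k)
  rw [condExp_const (𝔉.le k)] at hsub
  filter_upwards [hcond, hsub] with ω hω hsubω
  calc f (X k ω) - c * k = f (X k ω) + c - c * (k + 1 : ℕ) := by push_cast; ring
    _ ≤ (∫ y, f y ∂κ (X k ω)) - c * (k + 1 : ℕ) := by gcongr; exact hdrift _
    _ = _ := by rw [← hω]; exact hsubω.symm

end HasTransitionLaw

section NoisyStep

variable {E : Type*} [NormedAddCommGroup E] [MeasurableSpace E]

/-- The law of `X (k + 1)` when `X k = x`: with probability `1 - β` a jump `x + ε z` with `z` of law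
`ρ`, with probability `β` a uniform point of `B_ε(x)`. The weights are truncated to `ℝ≥0∞`, so this
is meant for `β ∈ [0, 1]`. -/
def noisyStepLaw [NormedSpace ℝ E] (vol : Measure E) (β ε : ℝ) (ρ : Measure E) (x : E) :
    Measure E :=
  ENNReal.ofReal (1 - β) • ρ.map (fun z ↦ x + ε • z) +
    ENNReal.ofReal β • ProbabilityTheory.cond vol (ball x ε)

section NormedSpace

variable [NormedSpace ℝ E] [BorelSpace E] (vol : Measure E) {β ε Λ : ℝ} {ρ : Measure E} (x : E)

lemma integral_noisyStepLaw {F : Type*} [NormedAddCommGroup F] [NormedSpace ℝ F]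
    (hβ : β ∈ Set.Icc 0 1) {g : E → F} (hg : AEStronglyMeasurable g (ρ.map fun z ↦ x + ε • z))
    (hg_jump : Integrable (fun z ↦ g (x + ε • z)) ρ)
    (hg_ball : Integrable g (ProbabilityTheory.cond vol (ball x ε))) :
    ∫ y, g y ∂noisyStepLaw vol β ε ρ x =
      (1 - β) • ∫ z, g (x + ε • z) ∂ρ + β • ⨍ y in ball x ε, g y ∂vol := by
  have hjump : AEMeasurable (fun z ↦ x + ε • z) ρ := by fun_prop
  rw [noisyStepLaw, integral_add_measure
      (((integrable_map_measure hg hjump).2 hg_jump).smul_measure ENNReal.ofReal_ne_top)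
      (hg_ball.smul_measure ENNReal.ofReal_ne_top),
    integral_smul_measure, integral_smul_measure, integral_map hjump hg,
    ENNReal.toReal_ofReal (sub_nonneg.2 hβ.2), ENNReal.toReal_ofReal hβ.1,
    setAverage_eq_integral_cond]

lemma ae_noisyStepLaw_mem_closedBall (hε : 0 ≤ ε) (hρ : ∀ᵐ z ∂ρ, ‖z‖ ≤ Λ) :
    ∀ᵐ y ∂noisyStepLaw vol β ε ρ x, y ∈ closedBall x (max (ε * Λ) ε) := by
  refine ae_add_measure_iff.2 ⟨Measure.ae_smul_measure ?_ _, Measure.ae_smul_measure ?_ _⟩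
  · refine (ae_map_iff (p := (· ∈ closedBall x _)) (by fun_prop) measurableSet_closedBall).2 ?_
    filter_upwards [hρ] with z hz
    rw [mem_closedBall, dist_self_add_left, norm_smul, Real.norm_of_nonneg hε]
    exact le_max_of_le_left (by gcongr)
  · filter_upwards [ProbabilityTheory.ae_cond_mem measurableSet_ball] with y hy
    exact closedBall_subset_closedBall (le_max_right _ _) (ball_subset_closedBall hy)

variable [FiniteDimensional ℝ E] [vol.IsAddHaarMeasure]

lemma isProbabilityMeasure_noisyStepLaw [IsProbabilityMeasure ρ] (hβ : β ∈ Set.Icc 0 1)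
    (hε : 0 < ε) : IsProbabilityMeasure (noisyStepLaw vol β ε ρ x) := by
  have := isProbabilityMeasure_cond_ball vol x hε
  have : IsProbabilityMeasure (ρ.map fun z ↦ x + ε • z) :=
    Measure.isProbabilityMeasure_map (by fun_prop)
  constructor
  simp only [noisyStepLaw, Measure.add_apply, Measure.smul_apply, measure_univ, smul_eq_mul,
    mul_one]
  rw [← ENNReal.ofReal_add (sub_nonneg.2 hβ.2) hβ.1, sub_add_cancel, ENNReal.ofReal_one]

lemma integral_id_noisyStepLaw [IsProbabilityMeasure ρ] (hβ : β ∈ Set.Icc 0 1) (hε : 0 < ε)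
    (hρ : Integrable (fun z ↦ z) ρ) (hmean : ∫ z, z ∂ρ = 0) :
    ∫ y, y ∂noisyStepLaw vol β ε ρ x = x := by
  have := isProbabilityMeasure_cond_ball vol x hε
  have hball : Integrable (fun y : E ↦ y) (ProbabilityTheory.cond vol (ball x ε)) := by
    refine .of_bound (by fun_prop) (‖x‖ + ε) ?_
    filter_upwards [ProbabilityTheory.ae_cond_mem measurableSet_ball] with y hy
    exact (norm_lt_of_mem_ball hy).le
  have hscaled : Integrable (fun z ↦ ε • z) ρ := hρ.smul ε
  rw [integral_noisyStepLaw (g := fun y ↦ y) vol x hβ (by fun_prop)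
      ((integrable_const x).add hscaled) hball,
    integral_add (integrable_const x) hscaled, integral_smul, hmean, setAverage_ball_id vol x hε]
  simp [← add_smul]

lemma le_integral_norm_sub_pow_noisyStepLaw (hβ : 0 ≤ β) (hε : 0 < ε) {p : ℕ} (hp : p ≠ 0)
    (hint : Integrable (fun y ↦ ‖y - x‖ ^ p) (noisyStepLaw vol β ε ρ x)) :
    β * (ε ^ p * (Module.finrank ℝ E / (Module.finrank ℝ E + p))) ≤
      ∫ y, ‖y - x‖ ^ p ∂noisyStepLaw vol β ε ρ x := by
  calc β * (ε ^ p * (Module.finrank ℝ E / (Module.finrank ℝ E + p)))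
      = ∫ y, ‖y - x‖ ^ p ∂(ENNReal.ofReal β • ProbabilityTheory.cond vol (ball x ε)) := by
        rw [integral_smul_measure, ENNReal.toReal_ofReal hβ, ← setAverage_eq_integral_cond,
          setAverage_ball_norm_sub_pow vol x hε hp, smul_eq_mul]
    _ ≤ ∫ y, ‖y - x‖ ^ p ∂noisyStepLaw vol β ε ρ x :=
        integral_mono_measure (Measure.le_add_left le_rfl) (ae_of_all _ fun y ↦ by positivity) hint

end NormedSpace

variable [InnerProductSpace ℝ E] [BorelSpace E] [FiniteDimensional ℝ E] (vol : Measure E)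
  [vol.IsAddHaarMeasure] {β ε Λ : ℝ}

lemma norm_sub_sq_add_le_integral_noisyStepLaw {ρ : Measure E} [IsProbabilityMeasure ρ]
    (hβ : β ∈ Set.Icc 0 1) (hε : 0 < ε) (hρ : ∀ᵐ z ∂ρ, ‖z‖ ≤ Λ) (hmean : ∫ z, z ∂ρ = 0) (x a : E) :
    ‖x - a‖ ^ 2 + β * (Module.finrank ℝ E / (Module.finrank ℝ E + 2)) * ε ^ 2 ≤
      ∫ y, ‖y - a‖ ^ 2 ∂noisyStepLaw vol β ε ρ x := by
  have := isProbabilityMeasure_noisyStepLaw vol (ρ := ρ) x hβ hε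
  have hL2 : MemLp (fun y ↦ y) 2 (noisyStepLaw vol β ε ρ x) := by
    refine .of_bound (by fun_prop) (‖x‖ + max (ε * Λ) ε) ?_
    filter_upwards [ae_noisyStepLaw_mem_closedBall vol x hε.le hρ] with y hy
    exact norm_le_of_mem_closedBall hy
  have hx : ∫ y, y ∂noisyStepLaw vol β ε ρ x = x :=
    integral_id_noisyStepLaw vol x hβ hε (.of_bound (by fun_prop) Λ hρ) hmean
  have hvar := le_integral_norm_sub_pow_noisyStepLaw vol x hβ.1 hε two_ne_zero
    ((hL2.sub (memLp_const x)).integrable_norm_pow two_ne_zero)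
  rw [integral_norm_sub_sq_eq_add_integral_norm_sub_mean_sq hL2, hx, mul_assoc, mul_comm (_ / _)]
  gcongr
  exact_mod_cast hvar

theorem submartingale_dist_sq_general (hε : 0 < ε) (hβ : β ∈ Set.Icc 0 1) (ν : E → Measure E)
    [∀ x, IsProbabilityMeasure (ν x)] (hsupp : ∀ x, ∀ᵐ z ∂ν x, ‖z‖ ≤ Λ)
    (hmean : ∀ x, ∫ z, z ∂ν x = 0) {Ω : Type*} {m0 : MeasurableSpace Ω} (μ : Measure Ω)
    [IsFiniteMeasure μ] (𝔉 : Filtration ℕ m0) (X : ℕ → Ω → E) (hadapted : Adapted 𝔉 X) (x₀ : E)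
    {r : ℝ} (hX0 : ∀ᵐ ω ∂μ, ‖X 0 ω - x₀‖ ≤ r)
    (hstep : ∀ (k : ℕ) (g : E → ℝ), Measurable g → (∃ M, ∀ y, |g y| ≤ M) →
      μ[fun ω ↦ g (X (k + 1) ω) | 𝔉 k] =ᵐ[μ] fun ω ↦
        (1 - β) * ∫ z, g (X k ω + ε • z) ∂ν (X k ω) + β * ⨍ y in ball (X k ω) ε, g y ∂vol) :
    Submartingale (fun k ω ↦ ‖X k ω - x₀‖ ^ 2 -
      β * (Module.finrank ℝ E / (Module.finrank ℝ E + 2)) * k * ε ^ 2) 𝔉 μ := by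
  have hlaw : HasTransitionLaw μ 𝔉 X fun x ↦ noisyStepLaw vol β ε (ν x) x := by
    rintro k g hg ⟨M, hM⟩
    filter_upwards [hstep k g hg ⟨M, hM⟩] with ω hω
    have := isProbabilityMeasure_cond_ball vol (X k ω) hε
    rw [hω, integral_noisyStepLaw vol (X k ω) hβ hg.aestronglyMeasurable, smul_eq_mul, smul_eq_mul]
    · exact .of_bound (hg.comp (by fun_prop)).aestronglyMeasurable M (ae_of_all _ fun z ↦ hM _)
    · exact .of_bound hg.aestronglyMeasurable M (ae_of_all _ hM)
  have hf_bdd (R : ℝ) : ∃ M, ∀ y ∈ closedBall x₀ R, |‖y - x₀‖ ^ 2| ≤ M := by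
    refine ⟨R ^ 2, fun y hy ↦ ?_⟩
    rw [abs_of_nonneg (by positivity)]
    gcongr
    exact mem_closedBall_iff_norm.1 hy
  simp_rw [mul_right_comm (β * _) _ (ε ^ 2)]
  exact hlaw.submartingale_comp_sub_mul hadapted
    (hX0.mono fun ω ↦ mem_closedBall_iff_norm.2)
    (fun x ↦ ae_noisyStepLaw_mem_closedBall vol x hε.le (hsupp x)) (by fun_prop) hf_bdd
    fun x ↦ norm_sub_sq_add_le_integral_noisyStepLaw vol hβ hε (hsupp x) (hmean x) x x₀

end NoisyStep

/-- `|X_k − x₀|² − C k ε²` is a submartingale for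
`C = β N/(N+2)`. -/
theorem submartingale_dist_sq (N : ℕ) (hN : 1 ≤ N) (Λ β ε : ℝ) (hΛ : 1 ≤ Λ) (hε : 0 < ε)
    (hβ : β ∈ Set.Ioc (0 : ℝ) 1)
    (ν : EuclideanSpace ℝ (Fin N) → Measure (EuclideanSpace ℝ (Fin N)))
    (hprob : ∀ x, IsProbabilityMeasure (ν x))
    (hsupp : ∀ x, ν x (closedBall (0 : EuclideanSpace ℝ (Fin N)) Λ)ᶜ = 0)
    (hsymm : ∀ x (E : Set (EuclideanSpace ℝ (Fin N))), MeasurableSet E → ν x E = ν x (-E))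
    (hmeas : ∀ w : EuclideanSpace ℝ (Fin N) → ℝ, Measurable w → (∃ M, ∀ y, |w y| ≤ M) →
      Measurable fun x => ∫ z, w (x + z) ∂ν x)
    {Ωhat : Type} [m0 : MeasurableSpace Ωhat] (μ : Measure Ωhat) [IsProbabilityMeasure μ]
    (𝔉 : Filtration ℕ m0)
    (X : ℕ → Ωhat → EuclideanSpace ℝ (Fin N)) (hadapted : Adapted 𝔉 X)
    (x₀ : EuclideanSpace ℝ (Fin N)) (hX0 : ∀ᵐ ω ∂μ, X 0 ω = x₀)
    (hstep : ∀ (k : ℕ) (g : EuclideanSpace ℝ (Fin N) → ℝ), Measurable g →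
      (∃ M, ∀ y, |g y| ≤ M) →
      (μ[(fun ω => g (X (k + 1) ω)) | 𝔉 k]) =ᵐ[μ]
        fun ω => (1 - β) * ∫ z, g (X k ω + ε • z) ∂ν (X k ω) +
          β * ⨍ y in ball (X k ω) ε, g y) :
    Submartingale
      (fun (k : ℕ) (ω : Ωhat) =>
        ‖X k ω - x₀‖ ^ 2 - (β * ((N : ℝ) / (N + 2))) * k * ε ^ 2) 𝔉 μ := by
  have hsupp' (x) : ∀ᵐ z ∂ν x, ‖z‖ ≤ Λ :=
    (show ∀ᵐ z ∂ν x, z ∈ closedBall 0 Λ from hsupp x).mono fun z ↦ mem_closedBall_zero_iff.1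
  have hmean (x) : ∫ z, z ∂ν x = 0 :=
    have := isNegInvariant_of_measure_neg_eq fun s hs ↦ (hsymm x s hs).symm
    integral_id_eq_zero_of_isNegInvariant (ν x)
  have hX0' : ∀ᵐ ω ∂μ, ‖X 0 ω - x₀‖ ≤ 0 := hX0.mono fun ω hω ↦ by simp [hω]
  simpa only [finrank_euclideanSpace_fin] using submartingale_dist_sq_general volume hε
    (Set.Ioc_subset_Icc_self hβ) ν hsupp' hmean μ 𝔉 X hadapted x₀ hX0' hstep
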